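/- In the setting of the repair procedure with m ∣ z, d = (m+1)μ, β = z/m, failed node f and helper set H = {ℓ_1, …, ℓ_d} with pairwise distinct nonzero e_{ℓ_1}, …, e_{ℓ_d}: for every 2 ≤ i ≤ β, let Υ̂_H(i) = Υ_H(i) − W_i · S_{2(i−1)m} · (e_f^{(i−1)mμ} φ_f)^T, where Υ_H(i) is the d × 1 column vector of repair symbols r_i(ℓ, f) for ℓ ∈ H and W_i is the d × μ matrix whose row for helper ℓ is e_ℓ^{(i−1)mμ−μ} φ_ℓ. Partition (Ω_H(i))^{−1} = [Θ_H(i); Ξ_H(i)] with Θ_H(i) the top (d−μ) × d submatrix and Ξ_H(i) the bottom μ × d submatrix. Then ψ_f(i) M_i = (Θ_H(i) Υ̂_H(i))^T and e_f^{imμ} φ_f S_{2im} = e_f^μ (Ξ_H(i) Υ̂_H(i))^T. -/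

import Mathlib

open Matrix Finset

section ProductMatrixBAMSR

variable {F : Type*} [Field F]

/-- The data matrix `M` of the bandwidth adaptive product-matrix MSR code:
a `((z+1)μ) × (zμ)` matrix built from a (1-indexed) family `S 1, …, S (2z)` of `μ × μ`
matrices, with `μ × μ` blocks `B(t,t) = S (2t-1)` for `1 ≤ t ≤ z`,
`B(t,t+1) = S (2t)` for `1 ≤ t ≤ z-1`, `B(t+1,t) = S (2t)` for `1 ≤ t ≤ z`, and all
other blocks zero. -/
def dataMatrix (z μ : ℕ) (hμ : 0 < μ) (S : ℕ → Matrix (Fin μ) (Fin μ) F) :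
    Matrix (Fin ((z + 1) * μ)) (Fin (z * μ)) F :=
  Matrix.of fun r c =>
    if r.val / μ = c.val / μ then
      S (2 * (c.val / μ) + 1) ⟨r.val % μ, Nat.mod_lt _ hμ⟩ ⟨c.val % μ, Nat.mod_lt _ hμ⟩
    else if r.val / μ + 1 = c.val / μ then
      S (2 * (r.val / μ) + 2) ⟨r.val % μ, Nat.mod_lt _ hμ⟩ ⟨c.val % μ, Nat.mod_lt _ hμ⟩
    else if r.val / μ = c.val / μ + 1 then
      S (2 * (c.val / μ) + 2) ⟨r.val % μ, Nat.mod_lt _ hμ⟩ ⟨c.val % μ, Nat.mod_lt _ hμ⟩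
    else 0

/-- Coefficient (row) vector of a node with evaluation point `e`:
`ψ = (e, e², …, e^{(z+1)μ})`. -/
def psiVec (z μ : ℕ) (e : F) : Fin ((z + 1) * μ) → F := fun r => e ^ (r.val + 1)

/-- Stored content of a node with evaluation point `e`: the row vector `x = ψ M`
of length `α = zμ`. -/
def stored (z μ : ℕ) (hμ : 0 < μ) (S : ℕ → Matrix (Fin μ) (Fin μ) F) (e : F) :
    Fin (z * μ) → F :=
  Matrix.vecMul (psiVec z μ e) (dataMatrix z μ hμ S)

/-- The row vector `φ = (e, e², …, e^μ)`. -/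
def phiVec (μ : ℕ) (e : F) : Fin μ → F := fun a => e ^ (a.val + 1)

/-- The `i`-th (1-indexed) length-`mμ` segment of the coefficient vector `ψ`:
`ψ(i) = (e^{(i-1)mμ+1}, …, e^{imμ})`. -/
def psiSeg (m μ i : ℕ) (e : F) : Fin (m * μ) → F :=
  fun a => e ^ ((i - 1) * (m * μ) + a.val + 1)

lemma seg_bound {z μ m i : ℕ} (hμ : 0 < μ) (hm : 0 < m) (hi1 : 1 ≤ i)
    (hiz : i ≤ z / m) (hdvd : m ∣ z) {a : ℕ} (ha : a < m * μ) :
    (i - 1) * (m * μ) + a < z * μ := by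
  obtain ⟨t, rfl⟩ := hdvd
  rw [Nat.mul_div_cancel_left t hm] at hiz
  obtain ⟨i', rfl⟩ := Nat.exists_eq_add_of_le hi1
  have h2 : (1 + i' - 1) * (m * μ) + m * μ = (1 + i') * (m * μ) := by
    have : 1 + i' - 1 = i' := by omega
    rw [this]; ring
  have h3 : (1 + i') * (m * μ) ≤ m * t * μ := by
    have hit : (1 + i') * m ≤ m * t := by nlinarith
    calc (1 + i') * (m * μ) = (1 + i') * m * μ := by ring
      _ ≤ m * t * μ := Nat.mul_le_mul_right _ hit
  omega

/-- The `i`-th (1-indexed) length-`mμ` segment of the stored content `x = ψ M`. -/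
def xSeg (z μ m i : ℕ) (hμ : 0 < μ) (hm : 0 < m) (hi1 : 1 ≤ i) (hiz : i ≤ z / m)
    (hdvd : m ∣ z) (S : ℕ → Matrix (Fin μ) (Fin μ) F) (e : F) : Fin (m * μ) → F :=
  fun a => stored z μ hμ S e ⟨(i - 1) * (m * μ) + a.val, seg_bound hμ hm hi1 hiz hdvd a.isLt⟩

/-- The repair symbol `r_i(h, f) = x_h(i) · (ψ_f(i))ᵀ` sent by a helper with evaluation
point `eh` for a failed node with evaluation point `ef`. -/
def repairSym (z μ m i : ℕ) (hμ : 0 < μ) (hm : 0 < m) (hi1 : 1 ≤ i) (hiz : i ≤ z / m)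
    (hdvd : m ∣ z) (S : ℕ → Matrix (Fin μ) (Fin μ) F) (eh ef : F) : F :=
  ∑ a, xSeg z μ m i hμ hm hi1 hiz hdvd S eh a * psiSeg m μ i ef a

/-- The `i`-th (1-indexed) diagonal `mμ × mμ` submatrix `M_i` of the data matrix,
consisting of rows and columns `(i-1)mμ+1, …, imμ`. -/
def subM (z μ m i : ℕ) (hμ : 0 < μ) (hm : 0 < m) (hi1 : 1 ≤ i) (hiz : i ≤ z / m)
    (hdvd : m ∣ z) (S : ℕ → Matrix (Fin μ) (Fin μ) F) :
    Matrix (Fin (m * μ)) (Fin (m * μ)) F :=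
  Matrix.of fun a b =>
    dataMatrix z μ hμ S
      ⟨(i - 1) * (m * μ) + a.val,
        lt_of_lt_of_le (seg_bound hμ hm hi1 hiz hdvd a.isLt)
          (Nat.mul_le_mul_right _ (Nat.le_succ z))⟩
      ⟨(i - 1) * (m * μ) + b.val, seg_bound hμ hm hi1 hiz hdvd b.isLt⟩

/-- The `d × d` matrix `Ω_H(i)` (with `d = (m+1)μ`) whose row for helper `ℓ r` is
`(e_{ℓ r}^{(i-1)mμ+1}, …, e_{ℓ r}^{(i-1)mμ+d})`, i.e. `[ψ_{ℓ r}(i), e_{ℓ r}^{imμ} φ_{ℓ r}]`. -/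
def OmegaMat (n μ m i : ℕ) (e : Fin n → F) (ℓ : Fin ((m + 1) * μ) → Fin n) :
    Matrix (Fin ((m + 1) * μ)) (Fin ((m + 1) * μ)) F :=
  Matrix.of fun r c => e (ℓ r) ^ ((i - 1) * (m * μ) + c.val + 1)

lemma nmat_aux1 {m μ r : ℕ} (h : r < (m + 1) * μ) (h2 : ¬ r < m * μ) : r - m * μ < μ := by
  have hh : (m + 1) * μ = m * μ + μ := by ring
  omega

lemma nmat_aux2 {m μ c : ℕ} (hm : 0 < m) (h : c < m * μ) (h2 : (m - 1) * μ ≤ c) :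
    c - (m - 1) * μ < μ := by
  have h3 : (m - 1) * μ + μ = m * μ := by
    cases m with
    | zero => omega
    | succ k => rw [Nat.succ_sub_one, Nat.succ_mul]
  omega

/-- The `d × mμ` matrix `N_i` whose top `mμ` rows form the matrix `Mi` and whose bottom
`μ` rows form the block row `[O, …, O, S₂]` of `m-1` zero `μ × μ` blocks followed by `S₂`. -/
def Nmat (μ m : ℕ) (hm : 0 < m) (Mi : Matrix (Fin (m * μ)) (Fin (m * μ)) F)
    (S2 : Matrix (Fin μ) (Fin μ) F) : Matrix (Fin ((m + 1) * μ)) (Fin (m * μ)) F :=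
  Matrix.of fun r c =>
    if h : r.val < m * μ then Mi ⟨r.val, h⟩ c
    else if h2 : (m - 1) * μ ≤ c.val then
      S2 ⟨r.val - m * μ, nmat_aux1 r.isLt h⟩ ⟨c.val - (m - 1) * μ, nmat_aux2 hm c.isLt h2⟩
    else 0

/-- The top `(d-μ) × d = mμ × d` submatrix `Θ` of a `d × d` matrix (`d = (m+1)μ`). -/
def ThetaMat (μ m : ℕ) (A : Matrix (Fin ((m + 1) * μ)) (Fin ((m + 1) * μ)) F) :
    Matrix (Fin (m * μ)) (Fin ((m + 1) * μ)) F :=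
  Matrix.of fun r c =>
    A ⟨r.val, lt_of_lt_of_le r.isLt (Nat.mul_le_mul_right _ (Nat.le_succ m))⟩ c

/-- The bottom `μ × d` submatrix `Ξ` of a `d × d` matrix (`d = (m+1)μ`). -/
def XiMat (μ m : ℕ) (A : Matrix (Fin ((m + 1) * μ)) (Fin ((m + 1) * μ)) F) :
    Matrix (Fin μ) (Fin ((m + 1) * μ)) F :=
  Matrix.of fun r c =>
    A ⟨m * μ + r.val, by
      have hh : (m + 1) * μ = m * μ + μ := by ring
      have hr := r.isLt
      omega⟩ c

end ProductMatrixBAMSR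

section Helpers

variable {F : Type*} [Field F]

def TT (μ : ℕ) (S : ℕ → Matrix (Fin μ) (Fin μ) F) (t a b : ℕ) : F :=
  if h : a < μ ∧ b < μ then S t ⟨a, h.1⟩ ⟨b, h.2⟩ else 0

def GG (μ : ℕ) (S : ℕ → Matrix (Fin μ) (Fin μ) F) (r c : ℕ) : F :=
  if r / μ = c / μ then TT μ S (2 * (c / μ) + 1) (r % μ) (c % μ)
  else if r / μ + 1 = c / μ then TT μ S (2 * (r / μ) + 2) (r % μ) (c % μ)
  else if r / μ = c / μ + 1 then TT μ S (2 * (c / μ) + 2) (r % μ) (c % μ)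
  else 0

lemma TT_fin {μ : ℕ} (S : ℕ → Matrix (Fin μ) (Fin μ) F) (t : ℕ) (a b : Fin μ) :
    TT μ S t a b = S t a b := by
  simp [TT]

lemma dm_eq (z μ : ℕ) (hμ : 0 < μ) (S : ℕ → Matrix (Fin μ) (Fin μ) F) (r c) :
    dataMatrix z μ hμ S r c = GG μ S r.val c.val := by
  simp [dataMatrix, GG, TT, Nat.mod_lt _ hμ]

lemma GG_lo {μ : ℕ} (S : ℕ → Matrix (Fin μ) (Fin μ) F) {r c : ℕ} (h : r / μ + 1 < c / μ) :
    GG μ S r c = 0 := by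
  unfold GG
  rw [if_neg (by omega), if_neg (by omega), if_neg (by omega)]

lemma GG_hi {μ : ℕ} (S : ℕ → Matrix (Fin μ) (Fin μ) F) {r c : ℕ} (h : c / μ + 1 < r / μ) :
    GG μ S r c = 0 := by
  unfold GG
  rw [if_neg (by omega), if_neg (by omega), if_neg (by omega)]

lemma div_aux {μ p a : ℕ} (ha : a < μ) : (p * μ + a) / μ = p := by
  rw [Nat.div_eq_iff (by omega)]
  constructor
  · rw [mul_comm]; omega
  · rw [mul_comm]; omega

lemma mod_aux {μ p a : ℕ} (ha : a < μ) : (p * μ + a) % μ = a := by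
  rw [Nat.mul_add_mod_self_right, Nat.mod_eq_of_lt ha]

lemma GG_up {μ : ℕ} (S : ℕ → Matrix (Fin μ) (Fin μ) F) {p a b : ℕ} (ha : a < μ) (hb : b < μ) :
    GG μ S (p * μ + a) ((p + 1) * μ + b) = TT μ S (2 * p + 2) a b := by
  unfold GG
  rw [div_aux ha, div_aux hb, mod_aux ha, mod_aux hb]
  simp

lemma GG_dn {μ : ℕ} (S : ℕ → Matrix (Fin μ) (Fin μ) F) {p a b : ℕ} (ha : a < μ) (hb : b < μ) :
    GG μ S ((p + 1) * μ + a) (p * μ + b) = TT μ S (2 * p + 2) a b := by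
  unfold GG
  rw [div_aux ha, div_aux hb, mod_aux ha, mod_aux hb]
  rw [if_neg (by omega), if_neg (by omega), if_pos rfl]

lemma TT_symm {μ z : ℕ} (S : ℕ → Matrix (Fin μ) (Fin μ) F)
    (hS : ∀ t, 1 ≤ t → t ≤ 2 * z → (S t).IsSymm) {t : ℕ} (h1 : 1 ≤ t) (h2 : t ≤ 2 * z)
    (a b : ℕ) : TT μ S t a b = TT μ S t b a := by
  unfold TT
  by_cases h : a < μ ∧ b < μ
  · rw [dif_pos h, dif_pos h.symm, (hS t h1 h2).apply]
  · rw [dif_neg h, dif_neg (fun h' => h h'.symm)]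

lemma GG_symm {μ z : ℕ} (S : ℕ → Matrix (Fin μ) (Fin μ) F)
    (hS : ∀ t, 1 ≤ t → t ≤ 2 * z → (S t).IsSymm) {r c : ℕ} (h1 : r / μ < z) (h2 : c / μ < z) :
    GG μ S r c = GG μ S c r := by
  unfold GG
  split_ifs <;> first | omega | rfl | skip
  · rename_i h _
    rw [h]
    exact TT_symm S hS (by omega) (by omega) _ _
  · exact TT_symm S hS (by omega) (by omega) _ _
  · exact TT_symm S hS (by omega) (by omega) _ _

lemma xcol {μ z p q : ℕ} (hμ : 0 < μ) (S : ℕ → Matrix (Fin μ) (Fin μ) F)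
    (hz : p + 1 + (q + 1) ≤ z) (E : F) {b : ℕ} (hb : b < (q + 1) * μ) :
    ∑ r ∈ range ((z + 1) * μ), E ^ (r + 1) * GG μ S r ((p + 1) * μ + b)
      = (if b < μ then ∑ a ∈ range μ, E ^ (p * μ + a + 1) * TT μ S (2 * p + 2) a b else 0)
        + ∑ c ∈ range ((q + 1 + 1) * μ),
            E ^ ((p + 1) * μ + c + 1) * GG μ S ((p + 1) * μ + c) ((p + 1) * μ + b) := by
  obtain ⟨w, rfl⟩ := Nat.exists_eq_add_of_le hz
  have hsz : (p + 1 + (q + 1) + w + 1) * μ = p * μ + μ + (q + 1 + 1) * μ + w * μ := by ring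
  have hN : (p + 1) * μ = p * μ + μ := by ring
  have hcol : ((p + 1) * μ + b) / μ = p + 1 + b / μ := by
    rw [add_comm, Nat.add_mul_div_right _ _ hμ, add_comm]
  have hbq : b / μ < q + 1 := (Nat.div_lt_iff_lt_mul hμ).2 hb
  rw [hsz, sum_range_add, sum_range_add, sum_range_add]
  have h1 : ∑ r ∈ range (p * μ), E ^ (r + 1) * GG μ S r ((p + 1) * μ + b) = 0 := by
    refine sum_eq_zero fun r hr => ?_
    have : r / μ < p := (Nat.div_lt_iff_lt_mul hμ).2 (mem_range.1 hr)
    have h0 := Nat.zero_le (b / μ)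
    rw [GG_lo S (by rw [hcol]; generalize b / μ = y at *; omega), mul_zero]
  have h4 : ∑ r ∈ range (w * μ), E ^ (p * μ + μ + (q + 1 + 1) * μ + r + 1) *
      GG μ S (p * μ + μ + (q + 1 + 1) * μ + r) ((p + 1) * μ + b) = 0 := by
    refine sum_eq_zero fun r hr => ?_
    have : p + 1 + (q + 1 + 1) ≤ (p * μ + μ + (q + 1 + 1) * μ + r) / μ := by
      rw [Nat.le_div_iff_mul_le hμ]
      have : (p + 1 + (q + 1 + 1)) * μ = p * μ + μ + (q + 1 + 1) * μ := by ring
      omega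
    rw [GG_hi S (by omega), mul_zero]
  rw [h1, h4, zero_add, add_zero, ← hN]
  congr 1
  split_ifs with h
  · refine sum_congr rfl fun a ha => ?_
    rw [GG_up S (mem_range.1 ha) h]
  · refine sum_eq_zero fun a ha => ?_
    have h5 : 1 ≤ b / μ := by rw [Nat.le_div_iff_mul_le hμ]; omega
    rw [GG_lo S (by rw [div_aux (mem_range.1 ha)]; omega), mul_zero]

/-- the decoded vector -/
def vv (μ p q : ℕ) (S : ℕ → Matrix (Fin μ) (Fin μ) F) (ef : F) (c : ℕ) : F :=
  ∑ b ∈ range ((q + 1) * μ), GG μ S ((p + 1) * μ + c) ((p + 1) * μ + b) * ef ^ ((p + 1) * μ + b + 1)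

lemma key {μ z p q : ℕ} (hμ : 0 < μ) (S : ℕ → Matrix (Fin μ) (Fin μ) F)
    (hz : p + 1 + (q + 1) ≤ z) (E ef : F) :
    ∑ b ∈ range ((q + 1) * μ),
      (∑ r ∈ range ((z + 1) * μ), E ^ (r + 1) * GG μ S r ((p + 1) * μ + b))
        * ef ^ ((p + 1) * μ + b + 1)
      = ∑ a ∈ range μ, E ^ (p * μ + a + 1) *
          ∑ b ∈ range μ, TT μ S (2 * p + 2) a b * ef ^ ((p + 1) * μ + b + 1)
        + ∑ c ∈ range ((q + 1 + 1) * μ), E ^ ((p + 1) * μ + c + 1) * vv μ p q S ef c := by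
  rw [sum_congr rfl fun b hb => by rw [xcol hμ S hz E (mem_range.1 hb), add_mul],
    sum_add_distrib]
  congr 1
  · have : (q + 1) * μ = μ + q * μ := by ring
    rw [this, sum_range_add]
    rw [sum_eq_zero (s := range (q * μ)), add_zero]
    · rw [sum_congr rfl fun b hb => by rw [if_pos (mem_range.1 hb), sum_mul], sum_comm]
      refine sum_congr rfl fun a _ => ?_
      rw [mul_sum]
      exact sum_congr rfl fun b _ => by ring
    · intro b _
      rw [if_neg (by omega), zero_mul]
  · simp_rw [vv, sum_mul, mul_sum]
    rw [sum_comm]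
    exact sum_congr rfl fun a _ => sum_congr rfl fun b _ => by ring

lemma vv_bot {μ p q : ℕ} (hμ : 0 < μ) (S : ℕ → Matrix (Fin μ) (Fin μ) F) (ef : F)
    {a : ℕ} (ha : a < μ) :
    vv μ p q S ef ((q + 1) * μ + a)
      = ∑ b ∈ range μ, TT μ S (2 * (p + 1 + q) + 2) a b * ef ^ ((p + 1 + q) * μ + b + 1) := by
  have hq : (q + 1) * μ = q * μ + μ := by ring
  have hr : (p + 1) * μ + ((q + 1) * μ + a) = (p + 1 + q + 1) * μ + a := by ring
  unfold vv
  rw [hr]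
  nth_rw 1 [hq]
  rw [sum_range_add, sum_eq_zero, zero_add]
  · refine sum_congr rfl fun b hb => ?_
    have hc : (p + 1) * μ + (q * μ + b) = (p + 1 + q) * μ + b := by ring
    rw [hc, GG_dn S ha (mem_range.1 hb)]
  · intro b hb
    have : ((p + 1) * μ + b) / μ < p + 1 + q := by
      rw [Nat.div_lt_iff_lt_mul hμ]
      have := mem_range.1 hb
      have : (p + 1 + q) * μ = (p + 1) * μ + q * μ := by ring
      omega
    rw [GG_hi S (by rw [div_aux ha]; omega), zero_mul]

lemma Omega_unit (n μ m i : ℕ) (e : Fin n → F) (he : ∀ j, e j ≠ 0)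
    (heinj : Function.Injective e) (ℓ : Fin ((m + 1) * μ) → Fin n) (hℓ : Function.Injective ℓ) :
    IsUnit (OmegaMat n μ m i e ℓ).det := by
  have : OmegaMat n μ m i e ℓ = Matrix.of fun r c =>
      (e (ℓ r) ^ ((i - 1) * (m * μ) + 1)) * Matrix.vandermonde (fun r => e (ℓ r)) r c := by
    ext r c
    simp only [OmegaMat, Matrix.of_apply, Matrix.vandermonde_apply]
    rw [← pow_add]; congr 1; ring
  rw [this, Matrix.det_mul_column]
  refine (isUnit_iff_ne_zero.2 (mul_ne_zero ?_ ?_))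
  · exact prod_ne_zero_iff.2 fun r _ => pow_ne_zero _ (he _)
  · exact Matrix.det_vandermonde_ne_zero_iff.2 (heinj.comp hℓ)

end Helpers


/-- for every `2 ≤ i ≤ β = z/m`, with
`Υ̂_H(i) = Υ_H(i) - W_i ⬝ S_{2(i-1)m} ⬝ (e_f^{(i-1)mμ} φ_f)ᵀ` and
`(Ω_H(i))⁻¹ = [Θ_H(i); Ξ_H(i)]`, we have `ψ_f(i) M_i = (Θ_H(i) Υ̂_H(i))ᵀ` and
`e_f^{imμ} φ_f S_{2im} = e_f^μ (Ξ_H(i) Υ̂_H(i))ᵀ`. -/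
theorem repair_decode_stepi {F : Type*} [Field F] (μ z m n : ℕ) (hμ : 0 < μ)
    (hz : 0 < z) (hm : 0 < m) (hdvd : m ∣ z) (hn : 0 < n)
    (e : Fin n → F) (he : ∀ j, e j ≠ 0) (heinj : Function.Injective e)
    (S : ℕ → Matrix (Fin μ) (Fin μ) F) (hS : ∀ t, 1 ≤ t → t ≤ 2 * z → (S t).IsSymm)
    (f : Fin n) (ℓ : Fin ((m + 1) * μ) → Fin n) (hℓ : Function.Injective ℓ)
    (hℓf : ∀ r, ℓ r ≠ f) :
    ∀ i, ∀ hi2 : 2 ≤ i, ∀ hiz : i ≤ z / m,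
    let ΥHat : Fin ((m + 1) * μ) → F :=
      (fun r : Fin ((m + 1) * μ) =>
          repairSym z μ m i hμ hm (by omega) hiz hdvd S (e (ℓ r)) (e f))
        - Matrix.mulVec
            (Matrix.of fun (r : Fin ((m + 1) * μ)) (c : Fin μ) =>
              e (ℓ r) ^ ((i - 1) * (m * μ) - μ) * phiVec μ (e (ℓ r)) c)
            (Matrix.mulVec (S (2 * (i - 1) * m))
              (fun a => e f ^ ((i - 1) * (m * μ)) * phiVec μ (e f) a))
    (Matrix.vecMul (psiSeg m μ i (e f)) (subM z μ m i hμ hm (by omega) hiz hdvd S)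
        = Matrix.mulVec (ThetaMat μ m (OmegaMat n μ m i e ℓ)⁻¹) ΥHat)
    ∧ ((fun c : Fin μ => e f ^ (i * (m * μ)) * Matrix.vecMul (phiVec μ (e f)) (S (2 * i * m)) c)
        = fun c : Fin μ => e f ^ μ * Matrix.mulVec (XiMat μ m (OmegaMat n μ m i e ℓ)⁻¹) ΥHat c) := by
  intro i hi2 hiz ΥHat
  have hU := Omega_unit n μ m i e he heinj ℓ hℓ
  obtain ⟨q, rfl⟩ : ∃ q, m = q + 1 := ⟨m - 1, by omega⟩
  obtain ⟨p, hp⟩ : ∃ p, (i - 1) * (q + 1) = p + 1 :=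
    ⟨(i - 1) * (q + 1) - 1, by
      have : 0 < (i - 1) * (q + 1) := Nat.mul_pos (by omega) hm
      omega⟩
  have hN : (i - 1) * ((q + 1) * μ) = (p + 1) * μ := by rw [← mul_assoc, hp]
  have hi : i * (q + 1) = p + 1 + (q + 1) := by
    rw [← hp]
    obtain ⟨k, rfl⟩ : ∃ k, i = k + 1 := ⟨i - 1, by omega⟩
    simp only [Nat.add_sub_cancel]; ring
  have hzz : p + 1 + (q + 1) ≤ z := by
    rw [← hi]; exact (Nat.le_div_iff_mul_le hm).1 hiz
  have hY : ΥHat = (OmegaMat n μ (q + 1) i e ℓ) *ᵥ (fun c => vv μ p q S (e f) c.val) := by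
    have h2 : 2 * (i - 1) * (q + 1) = 2 * p + 2 := by rw [mul_assoc, hp]; ring
    have h3 : (p + 1) * μ - μ = p * μ := by rw [add_mul, one_mul, Nat.add_sub_cancel]
    have hk := fun E => key hμ S hzz E (e f)
    simp only [sum_range] at hk
    funext r
    simp only [ΥHat, Pi.sub_apply, repairSym, xSeg, psiSeg, stored, Matrix.vecMul, Matrix.mulVec,
      dotProduct, psiVec, dm_eq, OmegaMat, Matrix.of_apply, phiVec, hN, h2, h3]
    rw [hk, sub_eq_iff_eq_add, add_comm]
    congr 1
    refine sum_congr rfl fun a _ => ?_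
    rw [← pow_add, add_assoc]
    congr 1
    refine sum_congr rfl fun b _ => ?_
    rw [TT_fin, ← pow_add, add_assoc]
  have hinv : (OmegaMat n μ (q + 1) i e ℓ)⁻¹ *ᵥ ΥHat = fun c => vv μ p q S (e f) c.val := by
    rw [hY, Matrix.mulVec_mulVec, Matrix.nonsing_inv_mul _ hU, Matrix.one_mulVec]
  constructor
  · funext c
    have hc := congrFun hinv
      ⟨c.val, lt_of_lt_of_le c.isLt (Nat.mul_le_mul_right _ (Nat.le_succ (q + 1)))⟩
    refine Eq.trans ?_ hc.symm
    simp only [Matrix.vecMul, dotProduct, psiSeg, subM, Matrix.of_apply, dm_eq, hN, vv, sum_range]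
    have hlt : ∀ x : Fin ((q + 1) * μ), ((p + 1) * μ + x.val) / μ < z := by
      intro x
      rw [Nat.div_lt_iff_lt_mul hμ]
      have h1 := x.isLt
      have h2 : (p + 1 + (q + 1)) * μ ≤ z * μ := Nat.mul_le_mul_right _ hzz
      rw [add_mul (p + 1) (q + 1)] at h2
      omega
    refine sum_congr rfl fun b _ => ?_
    rw [GG_symm S hS (hlt b) (hlt c), mul_comm]
  · funext a
    have ha := congrFun hinv ⟨(q + 1) * μ + a.val, by
      have hh : (q + 1 + 1) * μ = (q + 1) * μ + μ := by ring
      have hr := a.isLt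
      omega⟩
    have ha' : (XiMat μ (q + 1) (OmegaMat n μ (q + 1) i e ℓ)⁻¹ *ᵥ ΥHat) a
      = vv μ p q S (e f) ((q + 1) * μ + a.val) := ha
    rw [ha', vv_bot hμ S (e f) a.isLt]
    have h2 : 2 * i * (q + 1) = 2 * (p + 1 + q) + 2 := by rw [mul_assoc, hi]; ring
    have h3 : i * ((q + 1) * μ) = (p + 1 + q) * μ + μ := by rw [← mul_assoc, hi]; ring
    simp only [Matrix.vecMul, dotProduct, phiVec, h2, h3, sum_range, mul_sum]
    refine sum_congr rfl fun b _ => ?_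
    rw [TT_symm S hS (by omega) (by omega), TT_fin]
    ring
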